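/- Let n ≥ 2. Let W = S_n act on R by permuting the variables, let W_K ≤ W be the stabilizer of the letter n (so W_K ≅ S_{n−1}), and identify the coset space W/W_K with {1,…,n} via wW_K ↦ w(n). Then the map k : R^{W_K} ⊗_{R^W} R → Maps({1,…,n}, R) determined on decomposable elements by k(f ⊗ g)(i) = (w·f)·g, where w ∈ W is any permutation with w(n) = i, is well defined (independent of the choice of w), is a ring homomorphism, and is a ring isomorphism onto K_α(K_n). -/

import Mathlib

open scoped TensorProduct

/-- The Laurent polynomial ring `R = ℤ[z₁^{±1},…,z_n^{±1}]`, realized as the group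
algebra of `ℤⁿ` over `ℤ`. -/
abbrev Laur (n : ℕ) : Type := AddMonoidAlgebra ℤ (Fin n → ℤ)

/-- The variable `z_j ∈ R`. -/
noncomputable def Z (n : ℕ) (j : Fin n) : Laur n :=
  AddMonoidAlgebra.single (Pi.single j 1) 1

/-- The action of `σ ∈ S_n` on `R` by the ring automorphism permuting the variables,
`σ·z_i = z_{σ(i)}`. -/
noncomputable def permAut (n : ℕ) (σ : Equiv.Perm (Fin n)) : Laur n ≃ₐ[ℤ] Laur n :=
  AddMonoidAlgebra.domCongr ℤ ℤ
    { Equiv.piCongrLeft' (fun _ => ℤ) σ with map_add' := fun _ _ => rfl }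

/-- Membership in `K_α(K_n)`: `(z_j − z_k) ∣ g(j) − g(k)` for all `j ≠ k`. -/
def IsKClass (n : ℕ) (g : Fin n → Laur n) : Prop :=
  ∀ j k : Fin n, j ≠ k → (Z n j - Z n k) ∣ g j - g k

/-- The subring `R^W` of `W = S_n`-invariant Laurent polynomials. -/
noncomputable def Rsym (n : ℕ) : Subring (Laur n) where
  carrier := {f | ∀ σ : Equiv.Perm (Fin n), permAut n σ f = f}
  mul_mem' := fun {a b} ha hb σ => by rw [map_mul, ha σ, hb σ]
  one_mem' := fun σ => map_one _
  add_mem' := fun {a b} ha hb σ => by rw [map_add, ha σ, hb σ]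
  zero_mem' := fun σ => map_zero _
  neg_mem' := fun {a} ha σ => by rw [map_neg, ha σ]

/-- The subring `R^{W_K}` of invariants under the stabilizer `W_K` of the letter `d`. -/
noncomputable def RsymK (n : ℕ) (d : Fin n) : Subring (Laur n) where
  carrier := {f | ∀ σ : Equiv.Perm (Fin n), σ d = d → permAut n σ f = f}
  mul_mem' := fun {a b} ha hb σ hσ => by rw [map_mul, ha σ hσ, hb σ hσ]
  one_mem' := fun σ _ => map_one _
  add_mem' := fun {a b} ha hb σ hσ => by rw [map_add, ha σ hσ, hb σ hσ]
  zero_mem' := fun σ _ => map_zero _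
  neg_mem' := fun {a} ha σ hσ => by rw [map_neg, ha σ hσ]

noncomputable instance (n : ℕ) (d : Fin n) : Algebra (Rsym n) (RsymK n d) :=
  (Subring.inclusion (fun _ hf σ _ => hf σ : Rsym n ≤ RsymK n d)).toAlgebra

lemma permAut_single (n : ℕ) (σ : Equiv.Perm (Fin n)) (a : Fin n → ℤ) (b : ℤ) :
    permAut n σ (AddMonoidAlgebra.single a b) = AddMonoidAlgebra.single (fun i => a (σ.symm i)) b := by
  unfold permAut
  rw [AddMonoidAlgebra.domCongr_single]
  rfl

lemma permAut_Z (n : ℕ) (σ : Equiv.Perm (Fin n)) (j : Fin n) :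
    permAut n σ (Z n j) = Z n (σ j) := by
  unfold Z
  rw [permAut_single]
  congr 1
  funext i
  simp only [Pi.single_apply, Equiv.symm_apply_eq]

lemma permAut_mul (n : ℕ) (σ τ : Equiv.Perm (Fin n)) (f : Laur n) :
    permAut n (σ * τ) f = permAut n σ (permAut n τ f) := by
  induction f using AddMonoidAlgebra.induction_linear with
  | zero => simp
  | add f g hf hg => simp only [map_add, hf, hg]
  | single a b => simp only [permAut_single]; rfl

/-- substitution of `z_k` for `z_j` on exponents -/
noncomputable def substExp (n : ℕ) (j k : Fin n) : (Fin n → ℤ) →+ (Fin n → ℤ) where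
  toFun a := a + a j • (Pi.single k 1 - Pi.single j 1)
  map_zero' := by simp
  map_add' a b := by simp only [Pi.add_apply, add_smul]; abel

noncomputable def subst (n : ℕ) (j k : Fin n) : Laur n →+* Laur n :=
  AddMonoidAlgebra.mapDomainRingHom ℤ (substExp n j k)

lemma subst_single (n : ℕ) (j k : Fin n) (a : Fin n → ℤ) (b : ℤ) :
    subst n j k (AddMonoidAlgebra.single a b) = AddMonoidAlgebra.single (substExp n j k a) b := by
  simp [subst]

lemma subst_Z_self (n : ℕ) (j k : Fin n) : subst n j k (Z n j) = Z n k := by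
  simp [Z, subst_single, substExp]

lemma subst_Z_ne (n : ℕ) (j k i : Fin n) (h : i ≠ j) : subst n j k (Z n i) = Z n i := by
  simp [Z, subst_single, substExp, Pi.single_apply, h.symm]

lemma dvd_zpow_sub {A : Type*} [CommRing A] (u v : Aˣ) (m : ℤ) :
    ((u : A) - v) ∣ ((u ^ m : Aˣ) : A) - ((v ^ m : Aˣ) : A) := by
  cases m with
  | ofNat m => simpa using sub_dvd_pow_sub_pow (u : A) v m
  | negSucc m =>
    obtain ⟨c, hc⟩ := sub_dvd_pow_sub_pow (u : A) v (m+1)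
    refine ⟨-c * ((u⁻¹ ^ (m+1) : Aˣ) : A) * ((v⁻¹ ^ (m+1) : Aˣ) : A), ?_⟩
    have h1 : ((u ^ (m+1) : Aˣ) : A) * ((u⁻¹ ^ (m+1) : Aˣ) : A) = 1 := by
      rw [← Units.val_mul, ← mul_pow]; simp
    have h2 : ((v ^ (m+1) : Aˣ) : A) * ((v⁻¹ ^ (m+1) : Aˣ) : A) = 1 := by
      rw [← Units.val_mul, ← mul_pow]; simp
    rw [zpow_negSucc, zpow_negSucc, ← inv_pow, ← inv_pow]
    rw [← Units.val_pow_eq_pow_val, ← Units.val_pow_eq_pow_val] at hc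
    linear_combination (-((u⁻¹ ^ (m+1) : Aˣ) : A) * ((v⁻¹ ^ (m+1) : Aˣ) : A)) * hc
      + ((v⁻¹ ^ (m+1) : Aˣ) : A) * h1 - ((u⁻¹ ^ (m+1) : Aˣ) : A) * h2

/-- monomials as units -/
noncomputable def monU (n : ℕ) : Multiplicative (Fin n → ℤ) →* (Laur n)ˣ :=
  (Units.map (AddMonoidAlgebra.of ℤ (Fin n → ℤ))).comp
    (toUnits (G := Multiplicative (Fin n → ℤ))).toMonoidHom

lemma monU_val (n : ℕ) (a : Fin n → ℤ) :
    (monU n (Multiplicative.ofAdd a) : Laur n) = AddMonoidAlgebra.single a 1 := rfl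

lemma monU_zpow (n : ℕ) (a : Fin n → ℤ) (m : ℤ) :
    (((monU n (Multiplicative.ofAdd a)) ^ m : (Laur n)ˣ) : Laur n)
      = AddMonoidAlgebra.single (m • a) 1 := by
  rw [← map_zpow, ← ofAdd_zsmul, monU_val]

lemma dvd_sub_subst (n : ℕ) (j k : Fin n) (f : Laur n) :
    (Z n j - Z n k) ∣ f - subst n j k f := by
  induction f using AddMonoidAlgebra.induction_linear with
  | zero => simp
  | add f g hf hg => 
    rw [map_add, add_sub_add_comm]; exact dvd_add hf hg
  | single a b =>
    rw [subst_single]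
    have h := dvd_zpow_sub (monU n (Multiplicative.ofAdd (Pi.single j 1)))
      (monU n (Multiplicative.ofAdd (Pi.single k 1))) (a j)
    rw [monU_zpow, monU_zpow, monU_val, monU_val] at h
    refine (h.mul_left (AddMonoidAlgebra.single (a - a j • Pi.single j 1) b)).trans
      (dvd_of_eq ?_)
    rw [mul_sub, AddMonoidAlgebra.single_mul_single, AddMonoidAlgebra.single_mul_single]
    simp only [mul_one, sub_add_cancel]
    congr 2
    simp only [substExp, AddMonoidHom.coe_mk, ZeroHom.coe_mk, smul_sub]
    abel

lemma Z_inj (n : ℕ) : Function.Injective (Z n) := by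
  intro i j h
  have h2 := (AddMonoidAlgebra.single_left_injective (R := ℤ) one_ne_zero) h
  by_contra hne
  have := congrFun h2 i
  simp [Pi.single_apply, hne] at this

lemma dvd_iff_subst (n : ℕ) (j k : Fin n) (f : Laur n) (hjk : j ≠ k) :
    (Z n j - Z n k) ∣ f ↔ subst n j k f = 0 := by
  constructor
  · rintro ⟨c, rfl⟩
    rw [map_mul, map_sub, subst_Z_self, subst_Z_ne _ _ _ _ hjk.symm, sub_self, zero_mul]
  · intro h
    simpa [h] using dvd_sub_subst n j k f

lemma subst_swap (n : ℕ) (j k : Fin n) (f : Laur n) :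
    subst n j k (permAut n (Equiv.swap j k) f) = subst n j k f := by
  by_cases hjk : j = k
  · subst hjk
    have : permAut n (Equiv.swap j j) f = f := by
      induction f using AddMonoidAlgebra.induction_linear with
      | zero => simp
      | add f g hf hg => simp only [map_add, hf, hg]
      | single a b => simp [permAut_single]
    rw [this]
  induction f using AddMonoidAlgebra.induction_linear with
  | zero => simp
  | add f g hf hg => simp only [map_add, hf, hg]
  | single a b =>
    rw [permAut_single, subst_single, subst_single]
    congr 1
    funext i
    simp only [substExp, AddMonoidHom.coe_mk, ZeroHom.coe_mk, Pi.add_apply, Pi.smul_apply,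
      Pi.sub_apply, Pi.single_apply, Equiv.symm_swap, Equiv.swap_apply_left, smul_eq_mul]
    by_cases h1 : i = j
    · subst h1; simp [hjk]
    · by_cases h2 : i = k
      · subst h2; simp [h1]; ring
      · simp [h1, h2, Equiv.swap_apply_of_ne_of_ne]

lemma prod_dvd (n : ℕ) (a : Fin n) (s : Finset (Fin n)) (ha : a ∉ s) (x : Laur n)
    (h : ∀ j ∈ s, (Z n a - Z n j) ∣ x) : (∏ j ∈ s, (Z n a - Z n j)) ∣ x := by
  classical
  induction s using Finset.induction_on with
  | empty => simp
  | insert j s hj ih =>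
    have haj : a ≠ j := fun e => ha (by simp [e])
    have has : a ∉ s := fun e => ha (by simp [e])
    obtain ⟨q, hq⟩ := ih has (fun i hi => h i (by simp [hi]))
    have h1 := (dvd_iff_subst n a j x haj).1 (h j (by simp))
    rw [hq, map_mul, map_prod, mul_eq_zero] at h1
    rcases h1 with h1 | h1
    · exfalso
      rw [Finset.prod_eq_zero_iff] at h1
      obtain ⟨i, hi, h2⟩ := h1
      have hia : i ≠ a := fun e => has (e ▸ hi)
      rw [map_sub, subst_Z_self, subst_Z_ne _ _ _ _ hia, sub_eq_zero] at h2
      exact hj (Z_inj n h2 ▸ hi)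
    · rw [← dvd_iff_subst n a j q haj] at h1
      obtain ⟨c, rfl⟩ := h1
      rw [Finset.prod_insert hj, hq]
      exact ⟨c, by ring⟩

open Polynomial in
lemma interp (n : ℕ) (h : Fin n → Laur n) (hh : IsKClass n h) (s : Finset (Fin n)) :
    ∃ P : (Laur n)[X], P.degree < s.card ∧ ∀ j ∈ s, P.eval (Z n j) = h j := by
  classical
  induction s using Finset.induction_on with
  | empty => exact ⟨0, by simp⟩
  | insert a s ha ih =>
    obtain ⟨P, hP, hPe⟩ := ih
    have hd : (∏ j ∈ s, (Z n a - Z n j)) ∣ h a - P.eval (Z n a) := by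
      apply prod_dvd n a s ha
      intro j hj
      have haj : a ≠ j := fun e => ha (e ▸ hj)
      have h1 := hh a j haj
      have h2 := P.sub_dvd_eval_sub (Z n a) (Z n j)
      rw [hPe j hj] at h2
      have := dvd_sub h1 h2
      simpa using this
    obtain ⟨c, hc⟩ := hd
    refine ⟨P + C c * ∏ j ∈ s, (X - C (Z n j)), ?_, ?_⟩
    · rw [Finset.card_insert_of_notMem ha]
      have hlt : (s.card : WithBot ℕ) < ((s.card + 1 : ℕ) : WithBot ℕ) := by
        exact_mod_cast Nat.lt_succ_self _
      refine (degree_add_le _ _).trans_lt (max_lt (hP.trans hlt) ?_)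
      refine lt_of_le_of_lt ?_ hlt
      refine (degree_mul_le _ _).trans ?_
      have e : (∏ j ∈ s, (X - C (Z n j)) : (Laur n)[X]).degree = (s.card : WithBot ℕ) := by
        rw [degree_prod_of_monic _ _ (fun i _ => monic_X_sub_C _)]
        simp
      rw [e]
      calc _ ≤ (0 : WithBot ℕ) + s.card := by gcongr; exact degree_C_le
        _ = _ := zero_add _
    · intro j hj
      rw [eval_add, eval_mul, eval_C, eval_prod]
      simp only [eval_sub, eval_X, eval_C]
      rcases Finset.mem_insert.1 hj with rfl | hj
      · linear_combination -hc
      · rw [Finset.prod_eq_zero hj (sub_self _), hPe j hj]; simp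

open Polynomial in
lemma uniq (n : ℕ) (P Q : (Laur n)[X]) (hP : P.degree < n) (hQ : Q.degree < n)
    (h : ∀ j, P.eval (Z n j) = Q.eval (Z n j)) : P = Q := by
  refine Polynomial.eq_of_degrees_lt_of_eval_index_eq (v := Z n) Finset.univ
    (Z_inj n).injOn (by simpa using hP) (by simpa using hQ) (fun j _ => h j)

lemma permAut_wd (n : ℕ) (d : Fin n) (f : Laur n) (hf : f ∈ RsymK n d)
    (w v : Equiv.Perm (Fin n)) (h : w d = v d) : permAut n w f = permAut n v f := by
  have h1 : permAut n (v⁻¹ * w) f = f := hf _ (by simp [h])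
  conv_rhs => rw [← h1, ← permAut_mul]
  simp

lemma orbit_isK (n : ℕ) (d : Fin n) (f : Laur n) (hf : f ∈ RsymK n d) :
    IsKClass n (fun j => permAut n (Equiv.swap d j) f) := by
  intro j k hjk
  rw [dvd_iff_subst n j k _ hjk, map_sub, sub_eq_zero]
  have : permAut n (Equiv.swap d k) f
      = permAut n (Equiv.swap j k) (permAut n (Equiv.swap d j) f) := by
    rw [← permAut_mul]
    exact permAut_wd n d f hf _ _ (by simp)
  dsimp only
  rw [this, subst_swap]

open Polynomial in
lemma exists_poly (n : ℕ) (d : Fin n) (f : Laur n) (hf : f ∈ RsymK n d) :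
    ∃ P : (Rsym n)[X], P.degree < n ∧ (P.map (Rsym n).subtype).eval (Z n d) = f := by
  obtain ⟨P, hP, hPe⟩ := interp n _ (orbit_isK n d f hf) Finset.univ
  rw [Finset.card_fin] at hP
  have hinv : ∀ σ, P.map ((permAut n σ : Laur n ≃+* Laur n) : Laur n →+* Laur n) = P := by
    intro σ
    refine uniq n _ _ (degree_map_le.trans_lt hP) hP ?_
    intro j
    obtain ⟨i, rfl⟩ := σ.surjective j
    rw [hPe _ (Finset.mem_univ _), ← permAut_Z]
    have h1 := eval_map_apply (p := P) ((permAut n σ : Laur n ≃+* Laur n) : Laur n →+* Laur n) (Z n i)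
    refine h1.trans ?_
    rw [hPe _ (Finset.mem_univ _)]
    change permAut n σ _ = _
    rw [← permAut_mul]
    exact permAut_wd n d f hf _ _ (by simp)
  have hmem : ∀ i, P.coeff i ∈ Rsym n := by
    intro i σ
    have := congrArg (fun Q => Q.coeff i) (hinv σ)
    simpa using this
  have hl : P ∈ lifts (Rsym n).subtype := by
    rw [lifts_iff_coeff_lifts]
    intro i
    exact ⟨⟨_, hmem i⟩, rfl⟩
  obtain ⟨Q, hQ, hQd⟩ := mem_lifts_and_degree_eq hl
  refine ⟨Q, hQd ▸ hP, ?_⟩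
  rw [hQ, hPe _ (Finset.mem_univ _)]
  have := permAut_wd n d f hf (Equiv.swap d d) (1 * 1) (by simp)
  rw [this]
  exact hf _ (by simp)

lemma Z_mem (n : ℕ) (d : Fin n) : Z n d ∈ RsymK n d := by
  intro σ h
  rw [permAut_Z, h]

/-- first leg -/
noncomputable def leg1 (n : ℕ) (d : Fin n) : RsymK n d →ₐ[Rsym n] (Fin n → Laur n) :=
  { (Pi.ringHom (fun j => ((permAut n (Equiv.swap d j) : Laur n ≃+* Laur n) :
      Laur n →+* Laur n).comp (RsymK n d).subtype) : RsymK n d →+* (Fin n → Laur n)) with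
    commutes' := by
      intro r
      funext j
      exact r.2 (Equiv.swap d j) }

noncomputable def leg2 (n : ℕ) : Laur n →ₐ[Rsym n] (Fin n → Laur n) :=
  Pi.algHom _ _ (fun _ => AlgHom.id _ _)

set_option synthInstance.maxHeartbeats 1000000 in
noncomputable def kmap (n : ℕ) (d : Fin n) :
    (RsymK n d ⊗[Rsym n] Laur n) →ₐ[Rsym n] (Fin n → Laur n) :=
  Algebra.TensorProduct.lift (leg1 n d) (leg2 n) (fun _ _ => Commute.all _ _)

set_option synthInstance.maxHeartbeats 1000000 in
lemma kmap_tmul (n : ℕ) (d : Fin n) (f : RsymK n d) (g : Laur n) (j : Fin n) :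
    kmap n d (f ⊗ₜ g) j = permAut n (Equiv.swap d j) (f : Laur n) * g := by
  unfold kmap
  rw [Algebra.TensorProduct.lift_tmul]
  rfl

open Polynomial in
set_option synthInstance.maxHeartbeats 1000000 in
noncomputable def psi (n : ℕ) (d : Fin n) :
    (Laur n)[X] →+* (RsymK n d ⊗[Rsym n] Laur n) :=
  eval₂RingHom (Algebra.TensorProduct.includeRight : Laur n →ₐ[Rsym n] (RsymK n d ⊗[Rsym n] Laur n)).toRingHom
    ((⟨Z n d, Z_mem n d⟩ : RsymK n d) ⊗ₜ (1 : Laur n))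

open Polynomial in
set_option synthInstance.maxHeartbeats 1000000 in
lemma kmap_psi (n : ℕ) (d : Fin n) (P : (Laur n)[X]) (j : Fin n) :
    kmap n d (psi n d P) j = P.eval (Z n j) := by
  have : ((Pi.evalRingHom (fun _ : Fin n => Laur n) j).comp
      ((kmap n d).toRingHom.comp (psi n d))) = evalRingHom (Z n j) := by
    apply Polynomial.ringHom_ext
    · intro a
      have h1 : psi n d (C a) = 1 ⊗ₜ a := by
        unfold psi
        rw [coe_eval₂RingHom, eval₂_C]; rfl
      change kmap n d (psi n d (C a)) j = eval (Z n j) (C a)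
      rw [h1, kmap_tmul, eval_C]
      simp
    · have h1 : psi n d X = (⟨Z n d, Z_mem n d⟩ : RsymK n d) ⊗ₜ (1 : Laur n) := by
        unfold psi
        rw [coe_eval₂RingHom, eval₂_X]
      change kmap n d (psi n d X) j = eval (Z n j) X
      rw [h1, kmap_tmul, eval_X, permAut_Z]
      simp
  exact congrArg (fun φ : (Laur n)[X] →+* Laur n => φ P) this

open Polynomial in
set_option synthInstance.maxHeartbeats 1000000 in
lemma psi_map (n : ℕ) (d : Fin n) (Q : (Rsym n)[X]) :
    psi n d (Q.map (Rsym n).subtype)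
      = (eval₂ (algebraMap (Rsym n) (RsymK n d)) (⟨Z n d, Z_mem n d⟩ : RsymK n d) Q) ⊗ₜ (1 : Laur n) := by
  have : (psi n d).comp (mapRingHom (Rsym n).subtype) =
      (Algebra.TensorProduct.includeLeft : RsymK n d →ₐ[Rsym n] (RsymK n d ⊗[Rsym n] Laur n)).toRingHom.comp
        (eval₂RingHom (algebraMap (Rsym n) (RsymK n d)) (⟨Z n d, Z_mem n d⟩ : RsymK n d)) := by
    apply Polynomial.ringHom_ext
    · intro a
      have e1 : psi n d (map (Rsym n).subtype (C a)) = 1 ⊗ₜ (a : Laur n) := by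
        unfold psi
        rw [map_C, coe_eval₂RingHom, eval₂_C]; rfl
      have e2 : eval₂ (algebraMap (Rsym n) (RsymK n d)) (⟨Z n d, Z_mem n d⟩ : RsymK n d) (C a)
        = algebraMap (Rsym n) (RsymK n d) a := eval₂_C _ _
      change psi n d (map (Rsym n).subtype (C a)) = (eval₂ _ _ (C a)) ⊗ₜ (1 : Laur n)
      rw [e1, e2, Algebra.algebraMap_eq_smul_one, TensorProduct.smul_tmul, Algebra.smul_def, mul_one]
      rfl
    · have e1 : psi n d (map (Rsym n).subtype X) = (⟨Z n d, Z_mem n d⟩ : RsymK n d) ⊗ₜ (1 : Laur n) := by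
        unfold psi
        rw [map_X, coe_eval₂RingHom, eval₂_X]
      have e2 : eval₂ (algebraMap (Rsym n) (RsymK n d)) (⟨Z n d, Z_mem n d⟩ : RsymK n d) X
        = ⟨Z n d, Z_mem n d⟩ := eval₂_X _ _
      change psi n d (map (Rsym n).subtype X) = (eval₂ _ _ X) ⊗ₜ (1 : Laur n)
      rw [e1, e2]
  exact congrArg (fun φ : (Rsym n)[X] →+* (RsymK n d ⊗[Rsym n] Laur n) => φ Q) this

open Polynomial in
set_option synthInstance.maxHeartbeats 1000000 in
lemma psi_surj (n : ℕ) (d : Fin n) (t : RsymK n d ⊗[Rsym n] Laur n) :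
    ∃ P : (Laur n)[X], P.degree < n ∧ psi n d P = t := by
  induction t using TensorProduct.induction_on with
  | zero => exact ⟨0, by simp [WithBot.bot_lt_coe], map_zero _⟩
  | add x y hx hy =>
    obtain ⟨P, hP, rfl⟩ := hx
    obtain ⟨Q, hQ, rfl⟩ := hy
    exact ⟨P + Q, (degree_add_le _ _).trans_lt (max_lt hP hQ), map_add _ _ _⟩
  | tmul f g =>
    obtain ⟨Q, hQ, hQf⟩ := exists_poly n d f f.2
    refine ⟨Q.map (Rsym n).subtype * C g, ?_, ?_⟩
    · refine lt_of_le_of_lt (degree_mul_le _ _) ?_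
      refine lt_of_le_of_lt (add_le_add degree_map_le degree_C_le) ?_
      simpa using hQ
    · have h1 : psi n d (C g) = 1 ⊗ₜ g := by
        unfold psi
        rw [coe_eval₂RingHom, eval₂_C]; rfl
      have h2 : eval₂ (algebraMap (Rsym n) (RsymK n d)) (⟨Z n d, Z_mem n d⟩ : RsymK n d) Q = f := by
        apply Subtype.ext
        rw [← hQf, eval_map]
        change (RsymK n d).subtype _ = _
        rw [hom_eval₂]
        rfl
      rw [map_mul, psi_map, h1, h2, Algebra.TensorProduct.tmul_mul_tmul, one_mul, mul_one]

set_option synthInstance.maxHeartbeats 1000000 in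
/-- with `W = S_n` acting on `R`, `W_K` the stabilizer of the letter `n`
(coded by `⟨n−1,_⟩ : Fin n`), and `W/W_K ≅ {1,…,n}` via `w ↦ w(n)`, there is a
(necessarily unique, hence well-defined) ring homomorphism
`k : R^{W_K} ⊗_{R^W} R → Maps({1,…,n}, R)` with `k(f ⊗ g)(w(n)) = (w·f)·g` for all
`w ∈ W`, and it is a ring isomorphism onto `K_α(K_n)`. -/
theorem stmt13 (n : ℕ) (hn : 2 ≤ n) (d : Fin n) (hd : (d : ℕ) = n - 1) :
    ∃ k : (RsymK n d ⊗[Rsym n] Laur n) →+* (Fin n → Laur n),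
      (∀ (f : RsymK n d) (g : Laur n) (w : Equiv.Perm (Fin n)),
        k (f ⊗ₜ g) (w d) = permAut n w (f : Laur n) * g) ∧
      Function.Injective k ∧
      Set.range k = {h | IsKClass n h} := by
  refine ⟨(kmap n d).toRingHom, ?_, ?_, ?_⟩
  · intro f g w
    change kmap n d (f ⊗ₜ g) (w d) = _
    rw [kmap_tmul, permAut_wd n d f f.2 (Equiv.swap d (w d)) w (by simp)]
  · intro s t hst
    obtain ⟨P, hP, rfl⟩ := psi_surj n d s
    obtain ⟨Q, hQ, rfl⟩ := psi_surj n d t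
    rw [uniq n P Q hP hQ]
    intro j
    rw [← kmap_psi n d P, ← kmap_psi n d Q]
    exact congrFun hst j
  · ext h
    constructor
    · rintro ⟨t, rfl⟩
      obtain ⟨P, hP, rfl⟩ := psi_surj n d t
      intro j k _
      change _ ∣ kmap n d (psi n d P) j - kmap n d (psi n d P) k
      rw [kmap_psi, kmap_psi]
      exact P.sub_dvd_eval_sub _ _
    · intro hh
      obtain ⟨P, -, hP⟩ := interp n h hh Finset.univ
      refine ⟨psi n d P, ?_⟩
      funext j
      change kmap n d (psi n d P) j = _
      rw [kmap_psi, hP j (Finset.mem_univ _)]
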